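/- Fix q ∈ ℝ with 0 < q < 1 and δ, z ∈ ℂ with δ ∉ {q^m : m ∈ ℤ}, z ≠ 0, z ∉ {qⁿ : n ≥ 0} and z ∉ {qⁿ/δ : n ≥ 0}. Then [(q/(δz);q)_∞ / (z · (1/z;q)_∞ · (1/(zδ);q)_∞)] · ₁φ₁(1/(zδ); q/(zδ); q, q/z) = ∑_{n=0}^∞ { qⁿ / [(z − qⁿ)(q;q)_n (δq;q)_n (δ^{−1};q)_∞] + qⁿ / [(z − qⁿ/δ)(q;q)_n (q/δ;q)_n (δ;q)_∞] }, both sides being absolutely convergent. -/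

import Mathlib

/-!
Put `w = 1 / z` and `x = 1 / δ`. Since `(a;q)_k / (aq;q)_k = (1 - a) / (1 - a q^k)`, the left side
equals `w * L w` with
`L w = (w;q)_∞⁻¹ * ∑ (-1)^k q^(k(k+1)/2) w^k / ((q;q)_k (1 - x w q^k))`, while the right side
equals `w * R w`, where `R` is a sum of simple fractions with poles at `w = q^(-n)` and
`w = δ q^(-n)`. Both functions satisfy a `q`-difference equation
`(1 - w) (1 - x w) F w = c + x q w² F (w q)`:

* for `L`, with `c = 1`, by Euler's expansion of `(wq;q)_∞` (`euler`, `mL_func`);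
* for `R`, with `c = R 0`. Each of the two families of poles contributes a boundary term linear in
  `w`, the limit of a telescoping sum (`moment_relation`), and these two terms cancel
  (`boundary_cancel`).

The difference `R - R 0 * L` then satisfies the homogeneous equation. Along the orbit `w q^N` it is
bounded, and the factor `x q w² / ((1 - w) (1 - x w))` tends to `0`, so it vanishes (`rS_eq_mul`).
Clearing the pole at `w = δ` in both equations shows that `1 + q δ L (δ q)` and
`R 0 + q δ R (δ q)` both equal `1 / (δq;q)_∞`, which is not zero; hence `R 0 = 1` (`rS_eq`).
-/

open Filter

noncomputable def qp (q a : ℂ) (n : ℕ) : ℂ := ∏ j ∈ Finset.range n, (1 - a * q ^ j)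
noncomputable def qpInf (q a : ℂ) : ℂ := ∏' j : ℕ, (1 - a * q ^ j)
noncomputable def phi32 (q a b c d e w : ℂ) : ℂ :=
  ∑' k : ℕ, (qp q a k * qp q b k * qp q c k) / (qp q d k * qp q e k * qp q q k) * w ^ k
noncomputable def phi21 (q a b c w : ℂ) : ℂ :=
  ∑' k : ℕ, (qp q a k * qp q b k) / (qp q c k * qp q q k) * w ^ k
noncomputable def phi11 (q a b w : ℂ) : ℂ :=
  ∑' k : ℕ, qp q a k / (qp q b k * qp q q k) * (-1) ^ k * q ^ (k * (k - 1) / 2) * w ^ k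

noncomputable def Prec {K : Type*} [Field K] (a b2 : ℕ → K) (z : K) : ℕ → K
  | 0 => 1
  | 1 => z - a 0
  | n + 2 => (z - a (n + 1)) * Prec a b2 z (n + 1) - b2 (n + 1) * Prec a b2 z n

noncomputable def aCDH (q A B C D : ℂ) (n : ℕ) : ℂ :=
  (1 / A + 1 / B + 1 / C + 1 / D) * q ^ (n : ℤ) - (1 + q) * q ^ (2 * (n : ℤ) - 1)

noncomputable def bCDH (q A B C D : ℂ) (n : ℕ) : ℂ :=
  q / (A * B * C * D) * (1 - A * q ^ ((n : ℤ) - 1)) * (1 - B * q ^ ((n : ℤ) - 1)) *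
    (1 - C * q ^ ((n : ℤ) - 1)) * (1 - D * q ^ ((n : ℤ) - 1))

/-- `X` solves the associated continuous dual `q`-Hahn recurrence
`X_{n+1} - (z - a_n) X_n + b_n² X_{n-1} = 0` for `n ≥ 1`. -/
def SolvesCDH (q A B C D z : ℂ) (X : ℕ → ℂ) : Prop :=
  ∀ n : ℕ, 1 ≤ n →
    X (n + 1) - (z - aCDH q A B C D n) * X n + bCDH q A B C D n * X (n - 1) = 0

open scoped Topology

/-! ### `q`-Pochhammer symbols and a contraction principle -/

lemma qp_succ (q a : ℂ) (n : ℕ) : qp q a (n + 1) = qp q a n * (1 - a * q ^ n) :=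
  Finset.prod_range_succ _ _

lemma qp_ne_zero {q a : ℂ} (h : ∀ j : ℕ, 1 - a * q ^ j ≠ 0) (n : ℕ) : qp q a n ≠ 0 :=
  Finset.prod_ne_zero_iff.2 fun j _ => h j

lemma summable_norm_mul_pow {q : ℂ} (hq : ‖q‖ < 1) (a : ℂ) :
    Summable fun j : ℕ => ‖-(a * q ^ j)‖ := by
  simpa using (summable_geometric_of_lt_one (norm_nonneg q) hq).mul_left ‖a‖

lemma qp_multipliable {q : ℂ} (hq : ‖q‖ < 1) (a : ℂ) :
    Multipliable fun j : ℕ => 1 - a * q ^ j := by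
  simpa [sub_eq_add_neg] using multipliable_one_add_of_summable (summable_norm_mul_pow hq a)

lemma qp_tendsto {q : ℂ} (hq : ‖q‖ < 1) (a : ℂ) :
    Tendsto (qp q a) atTop (𝓝 (qpInf q a)) :=
  (qp_multipliable hq a).tendsto_prod_tprod_nat

lemma qpInf_ne_zero {q a : ℂ} (hq : ‖q‖ < 1) (h : ∀ j : ℕ, 1 - a * q ^ j ≠ 0) :
    qpInf q a ≠ 0 := by
  have := tprod_one_add_ne_zero_of_summable (f := fun j : ℕ => -(a * q ^ j))
    (by simpa [sub_eq_add_neg] using h) (summable_norm_mul_pow hq a)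
  simpa [qpInf, sub_eq_add_neg] using this

lemma qp_succ' (q a : ℂ) (n : ℕ) : qp q a (n + 1) = (1 - a) * qp q (a * q) n := by
  simp only [qp, Finset.prod_range_succ']
  rw [mul_comm]
  simp [pow_succ', mul_assoc]

lemma qpInf_split {q : ℂ} (hq : ‖q‖ < 1) (a : ℂ) :
    qpInf q a = (1 - a) * qpInf q (a * q) := by
  refine tendsto_nhds_unique ((qp_tendsto hq a).comp (tendsto_add_atTop_nat 1)) ?_
  refine ((qp_tendsto hq (a * q)).const_mul (1 - a)).congr fun n => ?_
  simp [qp_succ']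

lemma qpInf_split_nat {q : ℂ} (hq : ‖q‖ < 1) (a : ℂ) (n : ℕ) :
    qpInf q a = qp q a n * qpInf q (a * q ^ n) := by
  induction n with
  | zero => simp [qp]
  | succ n ih => rw [ih, qpInf_split hq (a * q ^ n), qp_succ]; ring_nf

lemma exists_norm_bound {f : ℕ → ℂ} {l : ℂ} (h : Tendsto f atTop (𝓝 l)) :
    ∃ C : ℝ, 0 ≤ C ∧ ∀ n, ‖f n‖ ≤ C := by
  obtain ⟨C, hC⟩ := h.norm.bddAbove_range
  exact ⟨C, (norm_nonneg _).trans (hC ⟨0, rfl⟩), fun n => hC ⟨n, rfl⟩⟩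

lemma one_sub_tendsto {q : ℂ} (hq : ‖q‖ < 1) (a : ℂ) :
    Tendsto (fun n : ℕ => 1 - a * q ^ n) atTop (𝓝 1) := by
  simpa using ((tendsto_pow_atTop_nhds_zero_of_norm_lt_one hq).const_mul a).const_sub 1

/-- Away from its pole, `1 / (1 - a q ^ n)` is bounded in `n`; a vanishing denominator is
harmless because of `0⁻¹ = 0`. -/
lemma inv_one_sub_bound {q : ℂ} (hq : ‖q‖ < 1) (a : ℂ) :
    ∃ C : ℝ, 0 ≤ C ∧ ∀ n : ℕ, ‖(1 - a * q ^ n)⁻¹‖ ≤ C :=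
  exists_norm_bound ((one_sub_tendsto hq a).inv₀ one_ne_zero)

lemma one_sub_pow_succ_ne {q : ℂ} (hq : ‖q‖ < 1) (n : ℕ) : 1 - q * q ^ n ≠ 0 := by
  intro h
  have h1 : q ^ (n + 1) = 1 := by rw [pow_succ']; linear_combination -h
  have h2 : ‖q‖ ^ (n + 1) < 1 := pow_lt_one₀ (norm_nonneg q) hq (by omega)
  rw [← norm_pow, h1] at h2
  simp at h2

/-- A bounded sequence with `f n = a n * f (n + 1)` and `a n → 0` vanishes. -/
lemma eq_zero_of_contraction {f a : ℕ → ℂ} {C : ℝ} (hf : ∀ n, ‖f n‖ ≤ C)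
    (ha : Tendsto a atTop (𝓝 0)) (h : ∀ n, f n = a n * f (n + 1)) : f 0 = 0 := by
  obtain ⟨N, hN⟩ : ∃ N, ∀ n ≥ N, ‖a n‖ ≤ 1 / 2 := by
    have := (tendsto_zero_iff_norm_tendsto_zero.1 ha).eventually_le_const
      (show (0 : ℝ) < 1 / 2 by norm_num)
    exact eventually_atTop.1 this
  have key : ∀ k n, N ≤ n → ‖f n‖ ≤ (1 / 2) ^ k * C := by
    intro k
    induction k with
    | zero => intro n _; simpa using hf n
    | succ k ih =>
      intro n hn
      rw [h n, norm_mul, pow_succ', mul_assoc]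
      exact mul_le_mul (hN n hn) (ih _ (by omega)) (norm_nonneg _) (by norm_num)
  have hz : f N = 0 := by
    have ht : Tendsto (fun k : ℕ => (1 / 2 : ℝ) ^ k * C) atTop (𝓝 0) := by
      simpa using (tendsto_pow_atTop_nhds_zero_of_lt_one (r := (1 / 2 : ℝ))
        (by norm_num) (by norm_num)).mul_const C
    exact norm_le_zero_iff.1 (ge_of_tendsto' ht fun k => key k N le_rfl)
  have back : ∀ m, f m = 0 → f 0 = 0 := by
    intro m
    induction m with
    | zero => exact id
    | succ m ih => intro hm; exact ih (by rw [h m, hm, mul_zero])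
  exact back N hz

/-! ### The pole expansion -/

/-- The coefficients `1 / ((q;q)_n (dq;q)_n)` of the pole expansion. -/
noncomputable def uS (q d : ℂ) (n : ℕ) : ℂ := (qp q q n * qp q (d * q) n)⁻¹

/-- The sum `∑ qⁿ / ((q;q)_n (dq;q)_n (1 - w qⁿ))` over one of the two families of poles,
in the variable `w = 1 / z`. -/
noncomputable def sS (q d w : ℂ) : ℂ := ∑' n : ℕ, q ^ n * uS q d n * (1 - w * q ^ n)⁻¹

lemma uS_succ {q d : ℂ} (hq : ‖q‖ < 1) (hd : ∀ n : ℕ, 1 - d * q * q ^ n ≠ 0) (n : ℕ) :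
    uS q d (n + 1) * ((1 - q * q ^ n) * (1 - d * q * q ^ n)) = uS q d n := by
  have h1 := one_sub_pow_succ_ne hq n
  have h2 := hd n
  have h3 := qp_ne_zero (one_sub_pow_succ_ne hq) n
  have h4 := qp_ne_zero hd n
  simp only [uS, qp_succ]
  generalize qp q (d * q) n = B at *
  generalize 1 - d * q * q ^ n = b at *
  field_simp

lemma uS_tendsto {q d : ℂ} (hq : ‖q‖ < 1) (hd : ∀ n : ℕ, 1 - d * q * q ^ n ≠ 0) :
    Tendsto (uS q d) atTop (𝓝 (qpInf q q * qpInf q (d * q))⁻¹) :=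
  ((qp_tendsto hq q).mul (qp_tendsto hq (d * q))).inv₀
    (mul_ne_zero (qpInf_ne_zero hq (one_sub_pow_succ_ne hq)) (qpInf_ne_zero hq hd))

/-- A bound uniform in `N`, along the orbit `w, wq, wq², …`. -/
lemma sS_term_bound {q d : ℂ} (hq : ‖q‖ < 1) (hd : ∀ n : ℕ, 1 - d * q * q ^ n ≠ 0) (w : ℂ) :
    ∃ C : ℝ, ∀ N n : ℕ,
      ‖q ^ n * uS q d n * (1 - w * q ^ N * q ^ n)⁻¹‖ ≤ C * ‖q‖ ^ n := by
  obtain ⟨C₁, h₁, hC₁⟩ := exists_norm_bound (uS_tendsto hq hd)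
  obtain ⟨C₂, h₂, hC₂⟩ := inv_one_sub_bound hq w
  refine ⟨C₁ * C₂, fun N n => ?_⟩
  rw [norm_mul, norm_mul, norm_pow, mul_assoc w, ← pow_add]
  calc ‖q‖ ^ n * ‖uS q d n‖ * ‖(1 - w * q ^ (N + n))⁻¹‖ ≤ ‖q‖ ^ n * C₁ * C₂ := by
        gcongr
        · exact hC₁ n
        · exact hC₂ _
    _ = _ := by ring

lemma sS_summable {q d : ℂ} (hq : ‖q‖ < 1) (hd : ∀ n : ℕ, 1 - d * q * q ^ n ≠ 0) (w : ℂ) :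
    Summable fun n : ℕ => q ^ n * uS q d n * (1 - w * q ^ n)⁻¹ := by
  obtain ⟨C, hC⟩ := sS_term_bound hq hd w
  exact Summable.of_norm_bounded
    ((summable_geometric_of_lt_one (norm_nonneg q) hq).mul_left C) (by simpa using hC 0)

lemma sS_bounded {q d : ℂ} (hq : ‖q‖ < 1) (hd : ∀ n : ℕ, 1 - d * q * q ^ n ≠ 0) (w : ℂ) :
    ∃ C : ℝ, ∀ N : ℕ, ‖sS q d (w * q ^ N)‖ ≤ C := by
  obtain ⟨C, hC⟩ := sS_term_bound hq hd w
  exact ⟨_, fun N => tsum_of_norm_bounded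
    ((summable_geometric_of_lt_one (norm_nonneg q) hq).mul_left C).hasSum (hC N)⟩

lemma sS_summable_one {q d : ℂ} (hq : ‖q‖ < 1) (hd : ∀ n : ℕ, 1 - d * q * q ^ n ≠ 0) :
    Summable fun n : ℕ => q ^ n * uS q d n := by
  simpa using sS_summable hq hd 0

lemma sS_summable_two {q d : ℂ} (hq : ‖q‖ < 1) (hd : ∀ n : ℕ, 1 - d * q * q ^ n ≠ 0) :
    Summable fun n : ℕ => q ^ n * (q ^ n * uS q d n) := by
  refine Summable.of_norm_bounded (sS_summable_one hq hd).norm fun n => ?_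
  rw [norm_mul, norm_pow]
  exact mul_le_of_le_one_left (norm_nonneg _) (pow_le_one₀ (norm_nonneg q) hq.le)

/-- The relation between the first two moments of the weights `qⁿ / ((q;q)_n (dq;q)_n)`: the
sum telescopes, and the limit of the coefficients remains as a boundary term. -/
lemma moment_relation {q d : ℂ} (hq : ‖q‖ < 1) (hd : ∀ n : ℕ, 1 - d * q * q ^ n ≠ 0) :
    d * ∑' n : ℕ, q ^ n * (q ^ n * uS q d n) - (1 + d) * ∑' n : ℕ, q ^ n * uS q d n =
      -(qpInf q q * qpInf q (d * q))⁻¹ := by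
  have hs := ((sS_summable_two hq hd).hasSum.mul_left d).sub
    ((sS_summable_one hq hd).hasSum.mul_left (1 + d))
  refine tendsto_nhds_unique (hs.tendsto_sum_nat.comp (tendsto_add_atTop_nat 1)) ?_
  refine (uS_tendsto hq hd).neg.congr fun N => ?_
  simp only [Function.comp]
  induction N with
  | zero => simp [uS, qp]
  | succ N ih =>
    rw [Finset.sum_range_succ, ← ih]
    linear_combination -uS_succ hq hd N

/-- The `q`-difference equation of `sS`. The `n = 0` term is kept apart, so that the identity
also holds at its pole `w = 1`. -/
lemma sS_func {q d x w : ℂ} (hq : ‖q‖ < 1) (hd : ∀ n : ℕ, 1 - d * q * q ^ n ≠ 0)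
    (hdx : d * x = 1) (hw : ∀ n : ℕ, 1 - w * q * q ^ n ≠ 0) :
    (1 - x * w) + (1 - w) * (1 - x * w) *
        ∑' n : ℕ, q ^ (n + 1) * uS q d (n + 1) * (1 - w * q ^ (n + 1))⁻¹ =
      sS q d 0 - w * x * (qpInf q q * qpInf q (d * q))⁻¹ + x * w ^ 2 * q * sS q d (w * q) := by
  have e1 := (sS_summable_one hq hd).tsum_eq_zero_add
  have e2 := (sS_summable_two hq hd).tsum_eq_zero_add
  have s1 := (summable_nat_add_iff 1).2 (sS_summable_one hq hd)
  have s2 := (summable_nat_add_iff 1).2 (sS_summable_two hq hd)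
  have s3 := sS_summable hq hd (w * q)
  have hm := moment_relation hq hd
  have h0 : sS q d 0 = ∑' n : ℕ, q ^ n * uS q d n := by simp [sS]
  have hu : uS q d 0 = 1 := by simp [uS, qp]
  have main : (1 - w) * (1 - x * w) *
        ∑' n : ℕ, q ^ (n + 1) * uS q d (n + 1) * (1 - w * q ^ (n + 1))⁻¹ =
      (1 - (1 + x) * w) * ∑' n : ℕ, q ^ (n + 1) * uS q d (n + 1) +
      w * ∑' n : ℕ, q ^ (n + 1) * (q ^ (n + 1) * uS q d (n + 1)) +
      x * w ^ 2 * q * sS q d (w * q) := by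
    rw [sS, ← tsum_mul_left, ← tsum_mul_left, ← tsum_mul_left, ← tsum_mul_left,
      ← (s1.mul_left _).tsum_add (s2.mul_left _),
      ← ((s1.mul_left _).add (s2.mul_left _)).tsum_add (s3.mul_left _)]
    refine tsum_congr fun n => ?_
    have hne : 1 - w * q ^ (n + 1) ≠ 0 := by
      have := hw n
      rwa [mul_assoc, ← pow_succ'] at this
    have hne' : 1 - w * q * q ^ n = 1 - w * q ^ (n + 1) := by ring
    rw [hne', ← uS_succ hq hd n]
    field_simp
    linear_combination (w ^ 2 * q ^ (2 * (n + 1)) - w ^ 2 * q ^ (3 * (n + 1))) *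
      uS q d (n + 1) * hdx
  rw [main, h0]
  rw [e1, e2, hu] at hm
  rw [e1, hu]
  linear_combination w * x * hm + w * (∑' n : ℕ, q ^ (n + 1) * uS q d (n + 1) -
    ∑' n : ℕ, q ^ (n + 1) * (q ^ (n + 1) * uS q d (n + 1))) * hdx

/-- The pole expansion as a function of `w = 1 / z` (up to the factor `w`), with `x = 1 / d`. -/
noncomputable def rS (q d x w : ℂ) : ℂ := sS q d w / qpInf q x + sS q x (x * w) / qpInf q d

/-- Shifting the base point of a nonvanishing family `1 - a qⁿ` by one. -/
lemma ne_shift {q a : ℂ} (h : ∀ n : ℕ, 1 - a * q ^ n ≠ 0) (n : ℕ) : 1 - a * q * q ^ n ≠ 0 := by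
  have := h (n + 1)
  rwa [pow_succ', ← mul_assoc] at this

/-- The boundary terms of the two families of poles cancel. -/
lemma boundary_cancel {q d x : ℂ} (hq : ‖q‖ < 1) (hdx : d * x = 1)
    (hd : ∀ n : ℕ, 1 - d * q ^ n ≠ 0) (hx : ∀ n : ℕ, 1 - x * q ^ n ≠ 0) :
    x * (qpInf q q * qpInf q (d * q))⁻¹ / qpInf q x +
      (qpInf q q * qpInf q (x * q))⁻¹ / qpInf q d = 0 := by
  have h1 : 1 - d ≠ 0 := by simpa using hd 0
  have h2 : 1 - x ≠ 0 := by simpa using hx 0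
  have h3 := qpInf_ne_zero hq (ne_shift hd)
  have h4 := qpInf_ne_zero hq (ne_shift hx)
  have h5 := qpInf_ne_zero hq (one_sub_pow_succ_ne hq)
  rw [qpInf_split hq d, qpInf_split hq x]
  generalize qpInf q (d * q) = A at *
  generalize qpInf q (x * q) = B at *
  generalize qpInf q q = P at *
  field_simp
  linear_combination -hdx

lemma sS_func_of_ne {q d x w : ℂ} (hq : ‖q‖ < 1) (hd : ∀ n : ℕ, 1 - d * q * q ^ n ≠ 0)
    (hdx : d * x = 1) (hw : ∀ n : ℕ, 1 - w * q ^ n ≠ 0) :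
    (1 - w) * (1 - x * w) * sS q d w =
      sS q d 0 - w * x * (qpInf q q * qpInf q (d * q))⁻¹ + x * w ^ 2 * q * sS q d (w * q) := by
  have h1 : 1 - w ≠ 0 := by simpa using hw 0
  have hu : uS q d 0 = 1 := by simp [uS, qp]
  rw [← sS_func hq hd hdx (ne_shift hw)]
  conv_lhs => rw [sS, (sS_summable hq hd w).tsum_eq_zero_add, hu]
  rw [mul_add]
  congr 1
  simp
  field_simp

lemma rS_func {q d x w : ℂ} (hq : ‖q‖ < 1) (hdx : d * x = 1)
    (hd : ∀ n : ℕ, 1 - d * q ^ n ≠ 0) (hx : ∀ n : ℕ, 1 - x * q ^ n ≠ 0)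
    (hw : ∀ n : ℕ, 1 - w * q ^ n ≠ 0) (hxw : ∀ n : ℕ, 1 - x * w * q ^ n ≠ 0) :
    (1 - w) * (1 - x * w) * rS q d x w = rS q d x 0 + x * w ^ 2 * q * rS q d x (w * q) := by
  have e1 := sS_func_of_ne hq (ne_shift hd) hdx hw
  have e2 := sS_func_of_ne hq (ne_shift hx) (mul_comm d x ▸ hdx) hxw
  have e3 := boundary_cancel hq hdx hd hx
  have a1 : d * (x * w) = w := by rw [← mul_assoc, hdx, one_mul]
  have a2 : x * w * d = w := by rw [mul_comm, a1]
  have a3 : d * (x * w) ^ 2 = x * w ^ 2 := by linear_combination x * w ^ 2 * hdx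
  rw [a1, a2, a3] at e2
  simp only [rS, mul_zero]
  rw [← mul_assoc x w q]
  simp only [div_eq_mul_inv] at *
  linear_combination (qpInf q x)⁻¹ * e1 + (qpInf q d)⁻¹ * e2 - w * e3

/-- The residue of the pole expansion at `w = d`, expressed through its value at `d q`: the
`q`-difference equation of `rS` with the pole cleared. -/
lemma rS_at_pole {q d x : ℂ} (hq : ‖q‖ < 1) (hdx : d * x = 1)
    (hd : ∀ n : ℕ, 1 - d * q ^ n ≠ 0) (hx : ∀ n : ℕ, 1 - x * q ^ n ≠ 0) :
    (qpInf q (d * q))⁻¹ = rS q d x 0 + q * d * rS q d x (d * q) := by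
  have h1 : 1 - d ≠ 0 := by simpa using hd 0
  have hxd : x * d = 1 := mul_comm d x ▸ hdx
  have e1 := sS_func_of_ne hq (ne_shift hd) hdx hd
  have e2 := sS_func (w := 1) hq (ne_shift hx) hxd
    (by simpa using one_sub_pow_succ_ne hq)
  have e3 := boundary_cancel hq hdx hd hx
  have e4 : (qpInf q (d * q))⁻¹ = (1 - d) * (qpInf q d)⁻¹ := by
    rw [qpInf_split hq d, mul_inv, mul_inv_cancel_left₀ h1]
  rw [hxd] at e1
  simp only [one_mul, mul_one, sub_self, zero_mul, add_zero, mul_zero, one_pow] at e1 e2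
  rw [e4]
  simp only [rS, mul_zero]
  rw [← mul_assoc x d q, hxd, one_mul]
  simp only [div_eq_mul_inv] at *
  linear_combination (qpInf q x)⁻¹ * e1 + (qpInf q d)⁻¹ * e2 - d * e3 +
    d * q * (qpInf q x)⁻¹ * sS q d (d * q) * hxd

lemma rS_bounded {q d x : ℂ} (hq : ‖q‖ < 1)
    (hd : ∀ n : ℕ, 1 - d * q ^ n ≠ 0) (hx : ∀ n : ℕ, 1 - x * q ^ n ≠ 0) (w : ℂ) :
    ∃ C : ℝ, ∀ N : ℕ, ‖rS q d x (w * q ^ N)‖ ≤ C := by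
  obtain ⟨C₁, h₁⟩ := sS_bounded hq (ne_shift hd) w
  obtain ⟨C₂, h₂⟩ := sS_bounded hq (ne_shift hx) (x * w)
  refine ⟨C₁ / ‖qpInf q x‖ + C₂ / ‖qpInf q d‖, fun N => ?_⟩
  refine (norm_add_le _ _).trans ?_
  rw [norm_div, norm_div, ← mul_assoc]
  gcongr
  · exact h₁ N
  · exact h₂ N

/-! ### The closed form -/

/-- The coefficients of Euler's expansion of `(wq;q)_∞`. -/
noncomputable def cL (q : ℂ) (k : ℕ) : ℂ := (-1) ^ k * q ^ (k * (k - 1) / 2) * q ^ k / qp q q k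

/-- The `₁φ₁` of the closed form, up to the factor `1 - x w`. -/
noncomputable def mL (q x w : ℂ) : ℂ := ∑' k : ℕ, cL q k * w ^ k * (1 - x * w * q ^ k)⁻¹

/-- The closed form as a function of `w = 1 / z`, up to the factor `w`. -/
noncomputable def lL (q x w : ℂ) : ℂ := mL q x w / qpInf q w

lemma cL_zero (q : ℂ) : cL q 0 = 1 := by simp [cL, qp]

lemma cL_succ {q : ℂ} (hq : ‖q‖ < 1) (k : ℕ) :
    cL q (k + 1) * (1 - q * q ^ k) = -(q * q ^ k) * cL q k := by
  have h1 := one_sub_pow_succ_ne hq k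
  have h2 := qp_ne_zero (one_sub_pow_succ_ne hq) k
  have h3 : (k + 1) * (k + 1 - 1) / 2 = k * (k - 1) / 2 + k := Nat.triangle_succ k
  simp only [cL, qp_succ, h3]
  generalize 1 - q * q ^ k = b at *
  field_simp
  ring

lemma cL_summable {q : ℂ} (hq : ‖q‖ < 1) (w : ℂ) : Summable fun k : ℕ => ‖cL q k * w ^ k‖ := by
  have ht : Tendsto (fun k : ℕ => -(q * w) * q ^ k * (1 - q * q ^ k)⁻¹) atTop (𝓝 0) := by
    simpa using ((tendsto_pow_atTop_nhds_zero_of_norm_lt_one hq).const_mul (-(q * w))).mul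
      ((one_sub_tendsto hq q).inv₀ one_ne_zero)
  have hev := (tendsto_zero_iff_norm_tendsto_zero.1 ht).eventually_le_const
    (show (0 : ℝ) < 1 / 2 by norm_num)
  refine summable_of_ratio_norm_eventually_le (r := 1 / 2) (by norm_num) ?_
  filter_upwards [hev] with k hk
  have hrec : cL q (k + 1) * w ^ (k + 1) =
      -(q * w) * q ^ k * (1 - q * q ^ k)⁻¹ * (cL q k * w ^ k) := by
    have h1 := one_sub_pow_succ_ne hq k
    have h2 := cL_succ hq k
    rw [← eq_div_iff h1] at h2
    rw [h2]
    ring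
  rw [norm_norm, norm_norm, hrec, norm_mul]
  exact mul_le_mul_of_nonneg_right hk (norm_nonneg _)

/-- Euler's expansion of `(wq;q)_∞`: both sides satisfy `f w = (1 - w q) f (w q)`, and both are
continuous at `0` along the orbit of `w`. -/
lemma euler {q : ℂ} (hq : ‖q‖ < 1) (w : ℂ) : ∑' k : ℕ, cL q k * w ^ k = qpInf q (w * q) := by
  have step : ∀ w : ℂ, ∑' k : ℕ, cL q k * w ^ k =
      (1 - w * q) * ∑' k : ℕ, cL q k * (w * q) ^ k := by
    intro w
    have s1 := (cL_summable hq w).of_norm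
    have s2 := (cL_summable hq (w * q)).of_norm
    have s1' := (summable_nat_add_iff 1).2 s1
    have s2' := (summable_nat_add_iff 1).2 s2
    rw [sub_mul, one_mul, s1.tsum_eq_zero_add]
    conv_rhs => enter [1]; rw [s2.tsum_eq_zero_add]
    rw [← tsum_mul_left, add_sub_assoc, ← s2'.tsum_sub (s2.mul_left _)]
    congr 1
    refine tsum_congr fun k => ?_
    linear_combination w ^ (k + 1) * cL_succ hq k
  have iter : ∀ N : ℕ, ∑' k : ℕ, cL q k * w ^ k =
      qp q (w * q) N * ∑' k : ℕ, cL q k * (w * q ^ N) ^ k := by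
    intro N
    induction N with
    | zero => simp [qp]
    | succ N ih => rw [ih, step, qp_succ]; ring_nf
  have lim : Tendsto (fun N : ℕ => ∑' k : ℕ, cL q k * (w * q ^ N) ^ k) atTop (𝓝 1) := by
    have h0 : ∑' k : ℕ, cL q k * (0 : ℂ) ^ k = 1 := by
      rw [tsum_eq_single 0 (fun k hk => by simp [hk])]
      simp [cL_zero]
    rw [← h0]
    refine tendsto_tsum_of_dominated_convergence (cL_summable hq w) (fun k => ?_)
      (Eventually.of_forall fun N k => ?_)
    · have : Tendsto (fun N : ℕ => w * q ^ N) atTop (𝓝 0) := by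
        simpa using (tendsto_pow_atTop_nhds_zero_of_norm_lt_one hq).const_mul w
      exact (this.pow k).const_mul _
    · rw [norm_mul, norm_mul, norm_pow, norm_pow, norm_mul, norm_pow]
      gcongr
      exact mul_le_of_le_one_right (norm_nonneg _) (pow_le_one₀ (norm_nonneg q) hq.le)
  refine tendsto_nhds_unique tendsto_const_nhds
    (((qp_tendsto hq (w * q)).mul lim).congr fun N => (iter N).symm) |>.trans (mul_one _)

lemma mL_term_bound {q : ℂ} (hq : ‖q‖ < 1) (x w : ℂ) :
    ∃ C : ℝ, ∀ N k : ℕ,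
      ‖cL q k * (w * q ^ N) ^ k * (1 - x * (w * q ^ N) * q ^ k)⁻¹‖ ≤ C * ‖cL q k * w ^ k‖ := by
  obtain ⟨C, h, hC⟩ := inv_one_sub_bound hq (x * w)
  refine ⟨C, fun N k => ?_⟩
  have e : x * (w * q ^ N) * q ^ k = x * w * q ^ (N + k) := by ring
  rw [e, norm_mul, mul_comm C]
  refine mul_le_mul ?_ (hC _) (norm_nonneg _) (norm_nonneg _)
  rw [norm_mul, norm_mul, norm_pow, norm_pow, norm_mul, norm_pow]
  gcongr
  exact mul_le_of_le_one_right (norm_nonneg _) (pow_le_one₀ (norm_nonneg q) hq.le)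

lemma mL_summable {q : ℂ} (hq : ‖q‖ < 1) (x w : ℂ) :
    Summable fun k : ℕ => cL q k * w ^ k * (1 - x * w * q ^ k)⁻¹ := by
  obtain ⟨C, hC⟩ := mL_term_bound hq x w
  exact Summable.of_norm_bounded ((cL_summable hq w).mul_left C) (by simpa using hC 0)

lemma lL_bounded {q w : ℂ} (hq : ‖q‖ < 1) (x : ℂ) (hw : ∀ n : ℕ, 1 - w * q ^ n ≠ 0) :
    ∃ C : ℝ, ∀ N : ℕ, ‖lL q x (w * q ^ N)‖ ≤ C := by
  obtain ⟨C, hC⟩ := mL_term_bound hq x w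
  have hM : ∀ N : ℕ, ‖mL q x (w * q ^ N)‖ ≤ ∑' k : ℕ, C * ‖cL q k * w ^ k‖ := fun N =>
    tsum_of_norm_bounded ((cL_summable hq w).mul_left C).hasSum (hC N)
  obtain ⟨C', h', hC'⟩ := exists_norm_bound (qp_tendsto hq w)
  have hne := qpInf_ne_zero hq hw
  refine ⟨(∑' k : ℕ, C * ‖cL q k * w ^ k‖) * (C' / ‖qpInf q w‖), fun N => ?_⟩
  have e : (qpInf q (w * q ^ N))⁻¹ = qp q w N / qpInf q w := by
    rw [qpInf_split_nat hq w N, div_mul_eq_div_div, div_self (qp_ne_zero hw N), one_div]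
  rw [lL, div_eq_mul_inv, e, norm_mul, norm_div]
  refine mul_le_mul (hM N) ?_ (by positivity) ((norm_nonneg _).trans (hM 0))
  gcongr
  exact hC' N

/-- The `q`-difference equation of `mL`, in a form that also holds at the pole `x w = 1`. -/
lemma mL_func {q x w : ℂ} (hq : ‖q‖ < 1) (hxw : ∀ n : ℕ, 1 - x * w * q * q ^ n ≠ 0) :
    1 + (1 - x * w) * ∑' k : ℕ, cL q (k + 1) * w ^ (k + 1) * (1 - x * w * q ^ (k + 1))⁻¹ =
      qpInf q (w * q) + x * w ^ 2 * q * mL q x (w * q) := by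
  have s1 := (cL_summable hq w).of_norm
  have s1' := (summable_nat_add_iff 1).2 s1
  have s2 := mL_summable hq x (w * q)
  rw [← euler hq w, s1.tsum_eq_zero_add, mL, ← tsum_mul_left, ← tsum_mul_left, add_assoc,
    ← s1'.tsum_add (s2.mul_left _), cL_zero, pow_zero, mul_one]
  congr 1
  refine tsum_congr fun k => ?_
  have e1 : x * (w * q) * q ^ k = x * w * q ^ (k + 1) := by ring
  have hne : 1 - x * w * q ^ (k + 1) ≠ 0 := by
    have := hxw k
    rwa [mul_assoc _ q, ← pow_succ'] at this
  rw [e1]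
  have h := cL_succ hq k
  field_simp
  linear_combination -x * w ^ (k + 2) * h

lemma lL_func {q x w : ℂ} (hq : ‖q‖ < 1)
    (hw : ∀ n : ℕ, 1 - w * q ^ n ≠ 0) (hxw : ∀ n : ℕ, 1 - x * w * q ^ n ≠ 0) :
    (1 - w) * (1 - x * w) * lL q x w = 1 + x * w ^ 2 * q * lL q x (w * q) := by
  have h1 : 1 - w ≠ 0 := by simpa using hw 0
  have h2 : 1 - x * w ≠ 0 := by simpa using hxw 0
  have h3 := qpInf_ne_zero hq (ne_shift hw)
  have h := mL_func hq (ne_shift hxw)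
  have e : (1 - x * w) * mL q x w =
      qpInf q (w * q) + x * w ^ 2 * q * mL q x (w * q) := by
    rw [← h, mL, (mL_summable hq x w).tsum_eq_zero_add, mul_add, cL_zero]
    congr 1
    simp
    field_simp
  rw [lL, lL, qpInf_split hq w]
  field_simp
  linear_combination e

lemma lL_at_pole {q d x : ℂ} (hq : ‖q‖ < 1) (hdx : d * x = 1)
    (hd : ∀ n : ℕ, 1 - d * q ^ n ≠ 0) :
    (qpInf q (d * q))⁻¹ = 1 + q * d * lL q x (d * q) := by
  have h3 := qpInf_ne_zero hq (ne_shift hd)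
  have hxd : x * d = 1 := mul_comm d x ▸ hdx
  have h := mL_func (x := x) (w := d) hq (by simpa [hxd] using one_sub_pow_succ_ne hq)
  rw [hxd, sub_self, zero_mul, add_zero] at h
  rw [lL]
  field_simp
  linear_combination h + d * q * mL q x (d * q) * hxd

/-! ### Comparison -/

/-- Both functions solve the same `q`-difference equation up to the constant `rS q d x 0`, so
their difference is contracted to `0` along the orbit of `w`. -/
lemma rS_eq_mul {q d x w : ℂ} (hq : ‖q‖ < 1) (hdx : d * x = 1)
    (hd : ∀ n : ℕ, 1 - d * q ^ n ≠ 0) (hx : ∀ n : ℕ, 1 - x * q ^ n ≠ 0)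
    (hw : ∀ n : ℕ, 1 - w * q ^ n ≠ 0) (hxw : ∀ n : ℕ, 1 - x * w * q ^ n ≠ 0) :
    rS q d x w = rS q d x 0 * lL q x w := by
  obtain ⟨C₁, h₁⟩ := rS_bounded hq hd hx w
  obtain ⟨C₂, h₂⟩ := lL_bounded hq x hw
  have hwN : Tendsto (fun N : ℕ => w * q ^ N) atTop (𝓝 0) := by
    simpa using (tendsto_pow_atTop_nhds_zero_of_norm_lt_one hq).const_mul w
  have ha : Tendsto (fun N : ℕ => x * q * (w * q ^ N) ^ 2 *
      ((1 - w * q ^ N)⁻¹ * (1 - x * w * q ^ N)⁻¹)) atTop (𝓝 0) := by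
    simpa using ((hwN.pow 2).const_mul (x * q)).mul
      (((one_sub_tendsto hq w).inv₀ one_ne_zero).mul
        ((one_sub_tendsto hq (x * w)).inv₀ one_ne_zero))
  have key := eq_zero_of_contraction
    (f := fun N => rS q d x (w * q ^ N) - rS q d x 0 * lL q x (w * q ^ N))
    (C := C₁ + ‖rS q d x 0‖ * C₂) (fun N => ?_) ha (fun N => ?_)
  · simpa [sub_eq_zero] using key
  · refine (norm_sub_le _ _).trans ?_
    rw [norm_mul]
    gcongr
    · exact h₁ N
    · exact h₂ N
  · have p1 : ∀ n : ℕ, 1 - w * q ^ N * q ^ n ≠ 0 := fun n => by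
      rw [mul_assoc, ← pow_add]; exact hw _
    have p2 : ∀ n : ℕ, 1 - x * (w * q ^ N) * q ^ n ≠ 0 := fun n => by
      rw [mul_assoc, mul_assoc, ← pow_add, ← mul_assoc]; exact hxw _
    have e1 := rS_func hq hdx hd hx p1 p2
    have e2 := lL_func hq p1 p2
    have n1 := hw N
    have n2 := hxw N
    have e3 : w * q ^ (N + 1) = w * q ^ N * q := by ring
    have e4 : x * w * q ^ N = x * (w * q ^ N) := by ring
    rw [e4] at n2
    simp only [e3, e4]
    generalize w * q ^ N = v at *
    generalize rS q d x (v * q) = r at *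
    generalize lL q x (v * q) = l at *
    field_simp
    linear_combination e1 - rS q d x 0 * e2

/-- Comparing the residues at `w = d` shows that the constant `rS q d x 0` is `1`. -/
lemma rS_eq {q d x w : ℂ} (hq : ‖q‖ < 1) (hdx : d * x = 1)
    (hd : ∀ n : ℕ, 1 - d * q ^ n ≠ 0) (hx : ∀ n : ℕ, 1 - x * q ^ n ≠ 0)
    (hw : ∀ n : ℕ, 1 - w * q ^ n ≠ 0) (hxw : ∀ n : ℕ, 1 - x * w * q ^ n ≠ 0) :
    rS q d x w = lL q x w := by
  have hxd : x * d = 1 := mul_comm d x ▸ hdx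
  have a1 := rS_at_pole hq hdx hd hx
  have a2 := lL_at_pole hq hdx hd
  have a3 := rS_eq_mul hq hdx hd hx (w := d * q) (ne_shift hd)
    (by simpa [← mul_assoc, hxd] using one_sub_pow_succ_ne hq)
  have hne : (qpInf q (d * q))⁻¹ ≠ 0 := inv_ne_zero (qpInf_ne_zero hq (ne_shift hd))
  have h1 : rS q d x 0 = 1 := by
    refine mul_right_cancel₀ hne ?_
    rw [a3] at a1
    linear_combination rS q d x 0 * a2 - a1
  rw [rS_eq_mul hq hdx hd hx hw hxw, h1, one_mul]

/-- The `₁φ₁` in question: its parameters differ by a factor `q`, so that its coefficients have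
simple denominators. -/
lemma phi11_eq {q x w : ℂ} (hq : ‖q‖ < 1) (hxw : ∀ n : ℕ, 1 - x * w * q ^ n ≠ 0) :
    phi11 q (x * w) (x * w * q) (w * q) = (1 - x * w) * mL q x w := by
  rw [phi11, mL, ← tsum_mul_left]
  refine tsum_congr fun k => ?_
  have h1 := hxw k
  have h2 := qp_ne_zero (ne_shift hxw) k
  have h3 := qp_ne_zero (one_sub_pow_succ_ne hq) k
  have h4 : qp q (x * w) k * (1 - x * w * q ^ k) = (1 - x * w) * qp q (x * w * q) k := by
    rw [← qp_succ, qp_succ']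
  have h5 : qp q (x * w) k = (1 - x * w) * qp q (x * w * q) k * (1 - x * w * q ^ k)⁻¹ := by
    rw [← h4, mul_assoc, mul_inv_cancel₀ h1, mul_one]
  rw [h5, cL, mul_pow]
  generalize qp q (x * w * q) k = B at *
  generalize 1 - x * w * q ^ k = b at *
  field_simp

/-- The explicit partial fraction (pole) expansion (6.18') for the `A = q` case of
associated Al-Salam--Carlitz I polynomials. -/
theorem stmt15 (q : ℝ) (hq0 : 0 < q) (hq1 : q < 1)
    (δ z : ℂ) (hδ0 : δ ≠ 0) (hz0 : z ≠ 0)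
    (hδ : ∀ m : ℤ, δ ≠ (q : ℂ) ^ m)
    (hz1 : ∀ n : ℕ, z ≠ (q : ℂ) ^ n) (hz2 : ∀ n : ℕ, z ≠ (q : ℂ) ^ n / δ) :
    Summable (fun n : ℕ =>
      ‖(q : ℂ) ^ n / ((z - (q : ℂ) ^ n) * qp q q n * qp q (δ * (q : ℂ)) n * qpInf q δ⁻¹) +
        (q : ℂ) ^ n / ((z - (q : ℂ) ^ n / δ) * qp q q n * qp q ((q : ℂ) / δ) n * qpInf q δ)‖) ∧
    qpInf q ((q : ℂ) / (δ * z)) / (z * qpInf q (1 / z) * qpInf q (1 / (z * δ))) *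
        phi11 q (1 / (z * δ)) ((q : ℂ) / (z * δ)) ((q : ℂ) / z) =
      ∑' n : ℕ,
        ((q : ℂ) ^ n / ((z - (q : ℂ) ^ n) * qp q q n * qp q (δ * (q : ℂ)) n * qpInf q δ⁻¹) +
          (q : ℂ) ^ n / ((z - (q : ℂ) ^ n / δ) * qp q q n * qp q ((q : ℂ) / δ) n * qpInf q δ)) := by
  have hq : ‖(q : ℂ)‖ < 1 := by rwa [Complex.norm_real, Real.norm_of_nonneg hq0.le]
  have hdx : δ * δ⁻¹ = 1 := mul_inv_cancel₀ hδ0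
  have hd : ∀ n : ℕ, 1 - δ * (q : ℂ) ^ n ≠ 0 := fun n h => hδ (-(n : ℤ)) <| by
    rw [zpow_neg, zpow_natCast]
    exact eq_inv_of_mul_eq_one_left (by linear_combination -h)
  have hx : ∀ n : ℕ, 1 - δ⁻¹ * (q : ℂ) ^ n ≠ 0 := fun n h => hδ n <| by
    rw [zpow_natCast]
    field_simp at h
    linear_combination h
  have hw : ∀ n : ℕ, 1 - z⁻¹ * (q : ℂ) ^ n ≠ 0 := fun n h => hz1 n <| by
    field_simp at h
    linear_combination h
  have hxw : ∀ n : ℕ, 1 - δ⁻¹ * z⁻¹ * (q : ℂ) ^ n ≠ 0 := fun n h => hz2 n <| by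
    rw [eq_div_iff hδ0]
    field_simp at h
    linear_combination h
  have key := rS_eq hq hdx hd hx hw hxw
  have S1 := sS_summable hq (ne_shift hd) z⁻¹
  have S2 := sS_summable hq (ne_shift hx) (δ⁻¹ * z⁻¹)
  have hterm : (fun n : ℕ =>
      ((q : ℂ) ^ n / ((z - (q : ℂ) ^ n) * qp q q n * qp q (δ * (q : ℂ)) n * qpInf q δ⁻¹) +
        (q : ℂ) ^ n / ((z - (q : ℂ) ^ n / δ) * qp q q n * qp q ((q : ℂ) / δ) n * qpInf q δ))) =
      fun n : ℕ => z⁻¹ / qpInf q δ⁻¹ *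
          ((q : ℂ) ^ n * uS q δ n * (1 - z⁻¹ * (q : ℂ) ^ n)⁻¹) +
        z⁻¹ / qpInf q δ *
          ((q : ℂ) ^ n * uS q δ⁻¹ n * (1 - δ⁻¹ * z⁻¹ * (q : ℂ) ^ n)⁻¹) := by
    funext n
    have e1 : z - (q : ℂ) ^ n = z * (1 - z⁻¹ * (q : ℂ) ^ n) := by field_simp
    have e2 : z - (q : ℂ) ^ n / δ = z * (1 - δ⁻¹ * z⁻¹ * (q : ℂ) ^ n) := by field_simp
    have e3 : (q : ℂ) / δ = δ⁻¹ * q := by rw [div_eq_mul_inv, mul_comm]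
    rw [e1, e2, e3]
    simp only [uS, div_eq_mul_inv, mul_inv]
    ring
  have hsum := (S1.mul_left (z⁻¹ / qpInf q δ⁻¹)).add (S2.mul_left (z⁻¹ / qpInf q δ))
  refine ⟨?_, ?_⟩
  · rw [← hterm] at hsum
    exact hsum.norm
  · rw [hterm, (S1.mul_left _).tsum_add (S2.mul_left _), tsum_mul_left, tsum_mul_left]
    have e1 : (q : ℂ) / (δ * z) = δ⁻¹ * z⁻¹ * q := by rw [div_eq_mul_inv, mul_inv, mul_comm]
    have e2 : (q : ℂ) / (z * δ) = δ⁻¹ * z⁻¹ * q := by rw [mul_comm z, e1]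
    have e3 : 1 / (z * δ) = δ⁻¹ * z⁻¹ := by rw [one_div, mul_inv, mul_comm]
    have e4 : (q : ℂ) / z = z⁻¹ * q := by rw [div_eq_mul_inv, mul_comm]
    have n1 : 1 - δ⁻¹ * z⁻¹ ≠ 0 := by simpa using hxw 0
    have n2 := qpInf_ne_zero hq (ne_shift hxw)
    rw [e1, e2, e3, e4, one_div, phi11_eq hq hxw, qpInf_split hq (δ⁻¹ * z⁻¹)]
    have hL : qpInf q (δ⁻¹ * z⁻¹ * q) /
          (z * qpInf q z⁻¹ * ((1 - δ⁻¹ * z⁻¹) * qpInf q (δ⁻¹ * z⁻¹ * q))) *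
        ((1 - δ⁻¹ * z⁻¹) * mL q δ⁻¹ z⁻¹) = z⁻¹ * lL q δ⁻¹ z⁻¹ := by
      rw [lL]
      generalize qpInf q (δ⁻¹ * z⁻¹ * q) = A at *
      generalize 1 - δ⁻¹ * z⁻¹ = b at *
      simp only [div_eq_mul_inv, mul_inv]
      linear_combination z⁻¹ * (qpInf q z⁻¹)⁻¹ * mL q δ⁻¹ z⁻¹ *
        (A * A⁻¹ * mul_inv_cancel₀ n1 + mul_inv_cancel₀ n2)
    rw [hL, ← key, rS, sS, sS]
    ring
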